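/- arXiv:1901.10944 — 7 statements merged into one kernel-verified Lean document; each statement's English description precedes it below -/
import Mathlib

section
/- Let A = (a, b; c, d) be a 2×2 real matrix with strictly positive entries and let R ≥ 1 satisfy 1/R ≤ a/c ≤ R and 1/R ≤ b/d ≤ R. Then for every z ∈ D one has |φ_A(z) − 1/2| ≤ R/(R+1) − 1/2; equivalently |2φ_A(z) − 1| ≤ (R−1)/(R+1). In particular φ_A maps D into D. -/
/-!
Write `u = a z + b (1 - z)` and `v = c z + d (1 - z)`, so that `φ_A(z) = u / (u + v)` and
`2 φ_A(z) - 1 = (u - v) / (u + v)`. In an inner product space, `(R + 1) ‖u - v‖ ≤ (R - 1) ‖u + v‖`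
says exactly that `R v - u` and `R u - v` make a non-obtuse angle. The ratio bounds make these two
vectors nonnegative combinations of `z` and `1 - z`, which themselves make a non-obtuse angle
because `z` lies in the disc with diameter `[0, 1]` (Thales).
-/

open Complex

/-- The complex Möbius map `φ_A(z) = ((a−b)z + b)/((a+c−b−d)z + b + d)`. -/
noncomputable def phiC (a b c d : ℝ) (z : ℂ) : ℂ :=
  (((a : ℂ) - b) * z + b) / (((a : ℂ) + c - b - d) * z + b + d)

open scoped RealInnerProductSpace

section InnerProductSpace

variable {V : Type*} [NormedAddCommGroup V] [InnerProductSpace ℝ V]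

lemma real_inner_nonneg_iff_norm_sub_le_norm_add {x y : V} :
    0 ≤ ⟪x, y⟫ ↔ ‖x - y‖ ≤ ‖x + y‖ := by
  rw [← sq_le_sq₀ (norm_nonneg _) (norm_nonneg _), norm_sub_sq_real, norm_add_sq_real]
  constructor <;> intro h <;> linarith

lemma mem_closedBall_midpoint_iff_inner_nonneg {P : Type*} [MetricSpace P]
    [NormedAddTorsor V P] {p p₁ p₂ : P} :
    p ∈ Metric.closedBall (midpoint ℝ p₁ p₂) (dist p₁ p₂ / 2) ↔ 0 ≤ ⟪p -ᵥ p₁, p₂ -ᵥ p⟫ := by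
  have hcenter : p -ᵥ midpoint ℝ p₁ p₂ = (2⁻¹ : ℝ) • ((p -ᵥ p₁) - (p₂ -ᵥ p)) := by
    rw [vsub_midpoint, invOf_eq_inv, ← smul_add, sub_eq_add_neg, neg_vsub_eq_vsub_rev]
  have hdiam : dist p₁ p₂ = ‖(p -ᵥ p₁) + (p₂ -ᵥ p)‖ := by
    rw [add_comm, vsub_add_vsub_cancel, dist_comm, dist_eq_norm_vsub V]
  rw [Metric.mem_closedBall, dist_eq_norm_vsub V, hcenter, hdiam, norm_smul,
    real_inner_nonneg_iff_norm_sub_le_norm_add, Real.norm_of_nonneg (by norm_num),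
    div_eq_inv_mul, mul_le_mul_iff_right₀ (by norm_num)]

lemma inner_smul_add_smul_nonneg {p q r s : ℝ} (hp : 0 ≤ p) (hq : 0 ≤ q) (hr : 0 ≤ r)
    (hs : 0 ≤ s) {x y : V} (hxy : 0 ≤ ⟪x, y⟫) :
    0 ≤ ⟪p • x + q • y, r • x + s • y⟫ := by
  have hexpand : ⟪p • x + q • y, r • x + s • y⟫ =
      p * r * ‖x‖ ^ 2 + (p * s + q * r) * ⟪x, y⟫ + q * s * ‖y‖ ^ 2 := by
    simp only [inner_add_left, inner_add_right, real_inner_smul_left, real_inner_smul_right,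
      real_inner_self_eq_norm_sq, real_inner_comm x y]
    ring
  rw [hexpand]
  positivity

lemma smul_add_smul_eq_zero_iff_of_inner_nonneg {p q : ℝ} (hp : 0 < p) (hq : 0 < q) {x y : V}
    (hxy : 0 ≤ ⟪x, y⟫) : p • x + q • y = 0 ↔ x = 0 ∧ y = 0 := by
  refine ⟨fun h ↦ ?_, fun ⟨hx, hy⟩ ↦ by simp [hx, hy]⟩
  have hinner : p * ‖x‖ ^ 2 + q * ⟪x, y⟫ = 0 := by
    rw [← real_inner_self_eq_norm_sq, ← real_inner_smul_right, ← real_inner_smul_right,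
      ← inner_add_right, h, inner_zero_right]
  have hx : x = 0 := by
    simpa [hp.ne'] using
      ((add_eq_zero_iff_of_nonneg (by positivity) (by positivity)).mp hinner).1
  exact ⟨hx, by simpa [hx, hq.ne'] using h⟩

lemma add_one_mul_norm_sub_le_iff_inner_nonneg {R : ℝ} (hR : 1 ≤ R) {u v : V} :
    (R + 1) * ‖u - v‖ ≤ (R - 1) * ‖u + v‖ ↔ 0 ≤ ⟪R • v - u, R • u - v⟫ := by
  have hpolar : ((R - 1) * ‖u + v‖) ^ 2 - ((R + 1) * ‖u - v‖) ^ 2 =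
      4 * ⟪R • v - u, R • u - v⟫ := by
    simp only [mul_pow, norm_sub_sq_real, norm_add_sq_real, inner_sub_left, inner_sub_right,
      real_inner_smul_left, real_inner_smul_right, real_inner_self_eq_norm_sq,
      real_inner_comm u v]
    ring
  rw [← sq_le_sq₀ (by positivity) (mul_nonneg (sub_nonneg.mpr hR) (norm_nonneg _)),
    ← sub_nonneg, hpolar]
  exact mul_nonneg_iff_of_pos_left four_pos

lemma add_one_mul_norm_sub_le_of_le_mul {a b c d R : ℝ} (hR : 1 ≤ R) (hac : a ≤ R * c)
    (hca : c ≤ R * a) (hbd : b ≤ R * d) (hdb : d ≤ R * b) {x y : V} (hxy : 0 ≤ ⟪x, y⟫) :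
    (R + 1) * ‖(a • x + b • y) - (c • x + d • y)‖ ≤
      (R - 1) * ‖(a • x + b • y) + (c • x + d • y)‖ := by
  rw [add_one_mul_norm_sub_le_iff_inner_nonneg hR]
  convert inner_smul_add_smul_nonneg (sub_nonneg.mpr hac) (sub_nonneg.mpr hbd)
    (sub_nonneg.mpr hca) (sub_nonneg.mpr hdb) hxy using 2 <;> module

end InnerProductSpace

lemma mem_closedBall_half_iff_inner_nonneg {z : ℂ} :
    z ∈ Metric.closedBall (1 / 2 : ℂ) (1 / 2) ↔ 0 ≤ ⟪z, 1 - z⟫ := by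
  simpa [midpoint_eq_smul_add] using
    mem_closedBall_midpoint_iff_inner_nonneg (V := ℂ) (p := z) (p₁ := 0) (p₂ := 1)

section phiC

variable {a b c d R : ℝ} {z : ℂ}

lemma phiC_eq_div (a b c d : ℝ) (z : ℂ) :
    phiC a b c d z =
      (a • z + b • (1 - z)) / ((a • z + b • (1 - z)) + (c • z + d • (1 - z))) := by
  simp only [phiC, real_smul]
  congr 1 <;> ring

lemma phiC_denom_ne_zero (hac : 0 < a + c) (hbd : 0 < b + d) (hz : 0 ≤ ⟪z, 1 - z⟫) :
    (a • z + b • (1 - z)) + (c • z + d • (1 - z)) ≠ 0 := by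
  rw [add_add_add_comm, ← add_smul, ← add_smul, Ne,
    smul_add_smul_eq_zero_iff_of_inner_nonneg hac hbd hz]
  rintro ⟨rfl, h⟩
  simp at h

lemma norm_two_mul_phiC_sub_one_le (hac₀ : 0 < a + c) (hbd₀ : 0 < b + d) (hR : 1 ≤ R)
    (hac : a ≤ R * c) (hca : c ≤ R * a) (hbd : b ≤ R * d) (hdb : d ≤ R * b)
    (hz : z ∈ Metric.closedBall (1 / 2 : ℂ) (1 / 2)) :
    ‖2 * phiC a b c d z - 1‖ ≤ (R - 1) / (R + 1) := by
  have hinner := mem_closedBall_half_iff_inner_nonneg.mp hz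
  have hbound := add_one_mul_norm_sub_le_of_le_mul hR hac hca hbd hdb hinner
  have hne := phiC_denom_ne_zero hac₀ hbd₀ hinner
  rw [phiC_eq_div]
  set u : ℂ := a • z + b • (1 - z)
  set v : ℂ := c • z + d • (1 - z)
  have hratio : 2 * (u / (u + v)) - 1 = (u - v) / (u + v) := by
    field_simp
    ring
  rw [hratio, norm_div, div_le_div_iff₀ (norm_pos_iff.mpr hne) (by linarith), mul_comm]
  exact hbound

end phiC

theorem stmt3_general (a b c d R : ℝ) (ha : 0 < a) (hb : 0 < b) (hc : 0 < c) (hd : 0 < d)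
    (hR : 1 ≤ R) (h1 : 1 / R ≤ a / c) (h2 : a / c ≤ R) (h3 : 1 / R ≤ b / d) (h4 : b / d ≤ R) :
    ∀ z ∈ Metric.closedBall ((1 : ℂ) / 2) (1 / 2),
      ‖phiC a b c d z - 1 / 2‖ ≤ R / (R + 1) - 1 / 2 ∧
      ‖2 * phiC a b c d z - 1‖ ≤ (R - 1) / (R + 1) ∧
      phiC a b c d z ∈ Metric.ball ((1 : ℂ) / 2) (1 / 2) := by
  intro z hz
  have hR₀ : 0 < R := one_pos.trans_le hR
  have hca : c ≤ R * a := by rwa [div_le_div_iff₀ hR₀ hc, one_mul, mul_comm] at h1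
  have hdb : d ≤ R * b := by rwa [div_le_div_iff₀ hR₀ hd, one_mul, mul_comm] at h3
  have hbound : ‖2 * phiC a b c d z - 1‖ ≤ (R - 1) / (R + 1) :=
    norm_two_mul_phiC_sub_one_le (add_pos ha hc) (add_pos hb hd) hR
      ((div_le_iff₀ hc).mp h2) hca ((div_le_iff₀ hd).mp h4) hdb hz
  have hhalf : ‖phiC a b c d z - 1 / 2‖ = ‖2 * phiC a b c d z - 1‖ / 2 := by
    rw [show phiC a b c d z - 1 / 2 = (2 * phiC a b c d z - 1) / 2 by ring, norm_div, norm_ofNat]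
  have hradius : R / (R + 1) - 1 / 2 = (R - 1) / (R + 1) / 2 := by
    field_simp
    ring
  have hlt : (R - 1) / (R + 1) < 1 := (div_lt_one (by linarith)).mpr (by linarith)
  refine ⟨?_, hbound, ?_⟩
  · rw [hhalf, hradius]
    linarith
  · rw [mem_ball_iff_norm, hhalf]
    linarith

theorem stmt3 (a b c d R : ℝ) (ha : 0 < a) (hb : 0 < b) (hc : 0 < c) (hd : 0 < d)
    (hR : 1 ≤ R) (h1 : 1 / R ≤ a / c) (h2 : a / c ≤ R) (h3 : 1 / R ≤ b / d) (h4 : b / d ≤ R) :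
    ∀ z ∈ Metric.ball ((1 : ℂ) / 2) (1 / 2),
      ‖phiC a b c d z - 1 / 2‖ ≤ R / (R + 1) - 1 / 2 ∧
      ‖2 * phiC a b c d z - 1‖ ≤ (R - 1) / (R + 1) ∧
      phiC a b c d z ∈ Metric.ball ((1 : ℂ) / 2) (1 / 2) :=
  fun z hz ↦ stmt3_general a b c d R ha hb hc hd hR h1 h2 h3 h4 z (Metric.ball_subset_closedBall hz)
end

section
/- Let A be an invertible 2×2 real matrix with strictly positive entries. Then φ_A has exactly one fixed point z_A in D (i.e. there is a unique z ∈ D with φ_A(z) = z), and this fixed point is real with 0 < z_A < 1. -/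
open Complex

/-!
Clearing denominators, the fixed points of `φ_A` are the roots of a real quadratic with value
`-b < 0` at `0` and `c > 0` at `1`. Such a quadratic has a root `x` in `(0, 1)`. If `z` is another
complex root, then Vieta's formula for the sum of the roots shows that the quadratic equals
`p (t - x) (t - re z)` at every real `t`; if `re z` were in `(0, 1)`, its values at `0` and `1`
would both have the sign of `p`.
-/

section Quadratic

variable {p q r u v x : ℝ} {z : ℂ}

theorem exists_quadratic_root_mem_Ioo (huv : u ≤ v) (hu : p * (u * u) + q * u + r < 0)
    (hv : 0 < p * (v * v) + q * v + r) : ∃ x ∈ Set.Ioo u v, p * (x * x) + q * x + r = 0 :=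
  intermediate_value_Ioo huv (f := fun t ↦ p * (t * t) + q * t + r) (by fun_prop) ⟨hu, hv⟩

theorem quadratic_eq_mul_sub_mul_sub_re (hx : p * (x * x) + q * x + r = 0)
    (hz : (p : ℂ) * (z * z) + q * z + r = 0) (hzx : z ≠ x) (t : ℝ) :
    p * (t * t) + q * t + r = p * ((t - x) * (t - z.re)) := by
  have hxC : (p : ℂ) * (x * x) + q * x + r = 0 := mod_cast hx
  have root_sum : (p : ℂ) * (z + x) + q = 0 := by
    apply mul_left_cancel₀ (sub_ne_zero.2 hzx)
    linear_combination hz - hxC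
  have root_sum_re : p * (z.re + x) + q = 0 := by
    simpa using congrArg re root_sum
  linear_combination (t - x) * root_sum_re + hx

theorem eq_of_quadratic_roots_re_mem_Ioo (hu : p * (u * u) + q * u + r < 0)
    (hv : 0 < p * (v * v) + q * v + r) (hxuv : x ∈ Set.Ioo u v)
    (hx : p * (x * x) + q * x + r = 0) (hzuv : z.re ∈ Set.Ioo u v)
    (hz : (p : ℂ) * (z * z) + q * z + r = 0) : z = x := by
  by_contra hzx
  rw [quadratic_eq_mul_sub_mul_sub_re hx hz hzx] at hu hv
  have hpos_u : 0 < (u - x) * (u - z.re) :=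
    mul_pos_of_neg_of_neg (sub_neg.2 hxuv.1) (sub_neg.2 hzuv.1)
  have hpos_v : 0 < (v - x) * (v - z.re) := mul_pos (sub_pos.2 hxuv.2) (sub_pos.2 hzuv.2)
  exact (neg_of_mul_neg_left hu hpos_u.le).not_gt (pos_of_mul_pos_left hv hpos_v.le)

end Quadratic

section MobiusMap

variable {a b c d x : ℝ} {z : ℂ}

/-- The denominator `w_A(z) = (a+c−b−d)z + b + d` of `φ_A(z)`. Where it vanishes, `phiC` takes
the junk value `0`. -/
def wC (a b c d : ℝ) (z : ℂ) : ℂ :=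
  ((a : ℂ) + c - b - d) * z + b + d

theorem phiC_eq_self_iff (hw : wC a b c d z ≠ 0) :
    phiC a b c d z = z ↔
      ((a + c - b - d : ℝ) : ℂ) * (z * z) + (2 * b + d - a : ℝ) * z + (-b : ℝ) = 0 := by
  rw [phiC, ← wC, div_eq_iff hw, wC]
  push_cast
  constructor <;> intro h <;> linear_combination -h

theorem wC_ne_zero_of_phiC_eq_self (hz : z ≠ 0) (hfix : phiC a b c d z = z) :
    wC a b c d z ≠ 0 := by
  intro hw
  rw [phiC, ← wC, hw, div_zero] at hfix
  exact hz hfix.symm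

theorem wC_ofReal_ne_zero_of_quadratic_eq_zero (hb : 0 < b) (hx : x ∈ Set.Ioo (0 : ℝ) 1)
    (hroot : (a + c - b - d) * (x * x) + (2 * b + d - a) * x + -b = 0)
    (hA : 0 < a ∨ a * d - b * c ≠ 0) : wC a b c d x ≠ 0 := by
  intro hwC
  rw [wC] at hwC
  have hw : (a + c - b - d) * x + b + d = 0 := mod_cast hwC
  have hnum : (a - b) * x + b = 0 := by linear_combination x * hw - hroot
  rcases hA with ha | hdet
  · have hnum_pos : 0 < a * x + b * (1 - x) :=
      add_pos (mul_pos ha hx.1) (mul_pos hb (sub_pos.2 hx.2))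
    linarith
  · -- The determinant is the resultant of the numerator and the denominator.
    exact hdet (by linear_combination (a - b) * hw - (a + c - b - d) * hnum)

end MobiusMap

section Disc

variable {u v x : ℝ} {z : ℂ}

theorem re_mem_Ioo_of_mem_ball (hz : z ∈ Metric.ball (((u : ℂ) + v) / 2) ((v - u) / 2)) :
    z.re ∈ Set.Ioo u v := by
  rw [Real.Ioo_eq_ball, Metric.mem_ball, Real.dist_eq]
  rw [Metric.mem_ball, dist_eq_norm] at hz
  simpa using (abs_re_le_norm (z - (u + v) / 2)).trans_lt hz

theorem ofReal_mem_ball (hx : x ∈ Set.Ioo u v) :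
    (x : ℂ) ∈ Metric.ball (((u : ℂ) + v) / 2) ((v - u) / 2) := by
  rw [Real.Ioo_eq_ball, Metric.mem_ball, ← isometry_ofReal.dist_eq] at hx
  simpa using hx

end Disc

theorem stmt4_general (a b c d : ℝ) (hb : 0 < b) (hc : 0 < c)
    (hA : 0 < a ∨ a * d - b * c ≠ 0) :
    ∃ x ∈ Set.Ioo (0 : ℝ) 1, phiC a b c d x = x ∧
      ∀ z : ℂ, z.re ∈ Set.Ioo (0 : ℝ) 1 → phiC a b c d z = z → z = x := by
  have h0 : (a + c - b - d) * (0 * 0) + (2 * b + d - a) * 0 + -b < 0 := by linarith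
  have h1 : 0 < (a + c - b - d) * (1 * 1) + (2 * b + d - a) * 1 + -b := by linarith
  obtain ⟨x, hx, hroot⟩ := exists_quadratic_root_mem_Ioo zero_le_one h0 h1
  have hw : wC a b c d x ≠ 0 := wC_ofReal_ne_zero_of_quadratic_eq_zero hb hx hroot hA
  refine ⟨x, hx, (phiC_eq_self_iff hw).2 (mod_cast hroot), fun z hz hfix ↦ ?_⟩
  have hz0 : z ≠ 0 := by
    rintro rfl
    exact hz.1.false
  have hwz : wC a b c d z ≠ 0 := wC_ne_zero_of_phiC_eq_self hz0 hfix
  exact eq_of_quadratic_roots_re_mem_Ioo h0 h1 hx hroot hz ((phiC_eq_self_iff hwz).1 hfix)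

theorem stmt4 (a b c d : ℝ) (ha : 0 < a) (hb : 0 < b) (hc : 0 < c) (hd : 0 < d)
    (hdet : a * d - b * c ≠ 0) :
    ∃ z : ℂ, z ∈ Metric.ball ((1 : ℂ) / 2) (1 / 2) ∧ phiC a b c d z = z ∧
      z.im = 0 ∧ 0 < z.re ∧ z.re < 1 ∧
      ∀ z' ∈ Metric.ball ((1 : ℂ) / 2) (1 / 2), phiC a b c d z' = z' → z' = z := by
  obtain ⟨x, hx, hfix, huniq⟩ := stmt4_general a b c d hb hc (.inr hdet)
  exact ⟨x, by simpa using ofReal_mem_ball hx, hfix, ofReal_im x, hx.1, hx.2,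
    fun z hz ↦ huniq z (re_mem_Ioo_of_mem_ball (by simpa using hz))⟩
end

section
/- For every real number r with 0 ≤ r < 1 and every integer n ≥ 1, Σ_{1 ≤ i₁ < i₂ < ⋯ < i_n} r^{i₁ + i₂ + ⋯ + i_n} = r^{n(n+1)/2} / ∏_{i=1}^n (1 − r^i). -/
/-!
Split an increasing tuple of positive integers `i₀ < i₁ < ⋯ < iₙ` into its first entry `k + 1 = i₀`
and the differences `i₁ - i₀ < ⋯ < iₙ - i₀`, which again form an arbitrary increasing tuple of
positive integers. The sum of the entries is `(n + 1) * (k + 1)` plus the sum of the differences, so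
the series for `n + 1` is the series for `n` multiplied by `∑ k, (r ^ (n + 1)) ^ (k + 1)`, which
equals `r ^ (n + 1) / (1 - r ^ (n + 1))`.
-/

/-- The strictly increasing `n`-tuples of positive integers, the index set of the series. It is an
abbreviation so that it can be interchanged with the explicit subtype. -/
abbrev IncreasingTuple (n : ℕ) : Type :=
  {f : Fin n → ℕ // StrictMono f ∧ ∀ j, 1 ≤ f j}

namespace IncreasingTuple

instance : Unique (IncreasingTuple 0) where
  default := ⟨Fin.elim0, Subsingleton.strictMono _, fun j ↦ j.elim0⟩
  uniq _ := Subsingleton.elim _ _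

/-- The tuple with first entry `k + 1` whose later entries exceed the first one by the entries
of `g`. -/
def consShift {n : ℕ} (k : ℕ) (g : IncreasingTuple n) : IncreasingTuple (n + 1) where
  val := Fin.cons (k + 1) fun j ↦ g.1 j + (k + 1)
  property :=
    ⟨Fin.strictMono_cons.2 ⟨fun j ↦ Nat.lt_add_of_pos_left (g.2.2 j), g.2.1.add_const (k + 1)⟩,
      Fin.cases (Nat.le_add_left 1 k) fun j ↦ Nat.le_add_right_of_le (g.2.2 j)⟩

/-- The differences between the later entries of a tuple and its first entry. -/
def tailDiff {n : ℕ} (f : IncreasingTuple (n + 1)) : IncreasingTuple n where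
  val j := f.1 j.succ - f.1 0
  property :=
    ⟨fun _ _ hab ↦ Nat.sub_lt_sub_right (f.2.1 (Fin.succ_pos _)).le
        (f.2.1 (Fin.succ_lt_succ_iff.2 hab)),
      fun j ↦ Nat.sub_pos_of_lt (f.2.1 j.succ_pos)⟩

lemma tailDiff_consShift {n : ℕ} (k : ℕ) (g : IncreasingTuple n) :
    tailDiff (consShift k g) = g :=
  Subtype.ext <| funext fun j ↦ Nat.add_sub_cancel (g.1 j) (k + 1)

lemma consShift_tailDiff {n : ℕ} (f : IncreasingTuple (n + 1)) :
    consShift (f.1 0 - 1) (tailDiff f) = f := by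
  have first_entry : f.1 0 - 1 + 1 = f.1 0 := Nat.sub_add_cancel (f.2.2 0)
  refine Subtype.ext <| funext <| Fin.cases first_entry fun j ↦ ?_
  change f.1 j.succ - f.1 0 + (f.1 0 - 1 + 1) = f.1 j.succ
  rw [first_entry, Nat.sub_add_cancel (f.2.1 j.succ_pos).le]

/-- The bijection between increasing tuples of length `n + 1` and pairs of a natural number (the
first entry minus one) and an increasing tuple of length `n` (the differences to the first
entry). -/
def consShiftEquiv (n : ℕ) : ℕ × IncreasingTuple n ≃ IncreasingTuple (n + 1) where
  toFun p := consShift p.1 p.2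
  invFun f := (f.1 0 - 1, tailDiff f)
  left_inv p := Prod.ext (Nat.add_sub_cancel p.1 1) (tailDiff_consShift p.1 p.2)
  right_inv := consShift_tailDiff

lemma sum_consShift {n : ℕ} (k : ℕ) (g : IncreasingTuple n) :
    ∑ j, (consShift k g).1 j = (n + 1) * (k + 1) + ∑ j, g.1 j := by
  simp only [consShift, Fin.sum_univ_succ, Fin.cons_zero, Fin.cons_succ, Finset.sum_add_distrib,
    Finset.sum_const, Finset.card_univ, Fintype.card_fin, smul_eq_mul]
  ring

lemma pow_sum_consShiftEquiv {M : Type*} [Monoid M] (r : M) {n : ℕ}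
    (p : ℕ × IncreasingTuple n) :
    r ^ (∑ j, (consShiftEquiv n p).1 j) = (r ^ (n + 1)) ^ (p.1 + 1) * r ^ (∑ j, p.2.1 j) := by
  rw [← pow_mul, ← pow_add]
  exact congrArg (r ^ ·) (sum_consShift p.1 p.2)

end IncreasingTuple

open IncreasingTuple

lemma norm_pow_succ_lt_one {R : Type*} [SeminormedRing R] {r : R} (hr : ‖r‖ < 1) (n : ℕ) :
    ‖r ^ (n + 1)‖ < 1 :=
  (norm_pow_le' r n.succ_pos).trans_lt (pow_lt_one₀ (norm_nonneg r) hr n.succ_ne_zero)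

lemma summable_norm_pow_succ {R : Type*} [NormedRing R] {a : R} (ha : ‖a‖ < 1) :
    Summable fun k : ℕ ↦ ‖a ^ (k + 1)‖ :=
  (summable_nat_add_iff 1).2 (summable_norm_geometric_of_norm_lt_one ha)

lemma hasSum_pow_succ {K : Type*} [NormedDivisionRing K] {a : K} (ha : ‖a‖ < 1) :
    HasSum (fun k : ℕ ↦ a ^ (k + 1)) (a / (1 - a)) := by
  simpa only [pow_succ', div_eq_mul_inv] using (hasSum_geometric_of_norm_lt_one ha).mul_left a

lemma hasSum_mul_of_summable_norm {ι κ R : Type*} [NormedRing R] {f : ι → R} {g : κ → R} {a b : R}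
    (hf : HasSum f a) (hg : HasSum g b) (hf' : Summable fun i ↦ ‖f i‖)
    (hg' : Summable fun j ↦ ‖g j‖) :
    HasSum (fun p : ι × κ ↦ f p.1 * g p.2) (a * b) :=
  hf.mul hg (summable_mul_of_summable_norm' hf' hf.summable hg' hg.summable)

lemma summable_norm_pow_sum {R : Type*} [NormedRing R] {r : R} (hr : ‖r‖ < 1) (n : ℕ) :
    Summable fun f : IncreasingTuple n ↦ ‖r ^ (∑ j, f.1 j)‖ := by
  induction n with
  | zero => exact .of_finite
  | succ n ih =>
    rw [← (consShiftEquiv n).summable_iff]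
    simpa only [Function.comp_def, pow_sum_consShiftEquiv] using
      (summable_norm_pow_succ (norm_pow_succ_lt_one hr n)).mul_norm ih

lemma pow_triangle_div_prod_succ {K : Type*} [Field K] (r : K) (n : ℕ) :
    r ^ ((n + 1) * (n + 1 + 1) / 2) / ∏ i ∈ Finset.range (n + 1), (1 - r ^ (i + 1)) =
      r ^ (n + 1) / (1 - r ^ (n + 1)) *
        (r ^ (n * (n + 1) / 2) / ∏ i ∈ Finset.range n, (1 - r ^ (i + 1))) := by
  have triangle : (n + 1) * (n + 1 + 1) / 2 = n * (n + 1) / 2 + (n + 1) := by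
    rw [mul_comm, mul_comm n]
    exact Nat.triangle_succ (n + 1)
  rw [triangle, pow_add, Finset.prod_range_succ, mul_div_mul_comm, mul_comm]

theorem stmt9_general {K : Type*} [NormedField K] {r : K} (hr : ‖r‖ < 1) (n : ℕ) :
    HasSum (fun f : {f : Fin n → ℕ // StrictMono f ∧ ∀ j, 1 ≤ f j} ↦ r ^ (∑ j, f.1 j))
      (r ^ (n * (n + 1) / 2) / ∏ i ∈ Finset.range n, (1 - r ^ (i + 1))) := by
  induction n with
  | zero => simp
  | succ n ih =>
    have hq : ‖r ^ (n + 1)‖ < 1 := norm_pow_succ_lt_one hr n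
    have geometric := hasSum_pow_succ hq
    rw [← (consShiftEquiv n).hasSum_iff, pow_triangle_div_prod_succ]
    simpa only [Function.comp_def, pow_sum_consShiftEquiv] using
      hasSum_mul_of_summable_norm geometric ih (summable_norm_pow_succ hq)
        (summable_norm_pow_sum hr n)

theorem stmt9 (r : ℝ) (hr0 : 0 ≤ r) (hr1 : r < 1) (n : ℕ) (hn : 1 ≤ n) :
    ∑' f : {f : Fin n → ℕ // StrictMono f ∧ ∀ j, 1 ≤ f j}, r ^ (∑ j, f.1 j) =
      r ^ (n * (n + 1) / 2) / ∏ i ∈ Finset.range n, (1 - r ^ (i + 1)) :=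
  (stmt9_general (by rwa [Real.norm_of_nonneg hr0]) n).tsum_eq
end

section
/- Suppose f : (0,1) → ℝ is not identically zero, K ≥ 0 satisfies |f(x) − f(y)| ≤ K·h(x, y) for all x, y ∈ (0,1), and λ ∈ ℝ with λ ≠ 1 satisfies Σ_{i=1}^k p_i f(φ̃_{A_i}(x)) = λ·f(x) for every x ∈ (0,1). Then |λ| ≤ τ(𝒜, p). -/
/-- The projective action `φ̃_A` of `A = (a, b; c, d)` in coordinates on `(0,1)`. -/
noncomputable def phiM (M : Matrix (Fin 2) (Fin 2) ℝ) (x : ℝ) : ℝ :=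
  ((M 0 0 - M 0 1) * x + M 0 1) / ((M 0 0 + M 1 0 - M 0 1 - M 1 1) * x + M 0 1 + M 1 1)

/-- `ψ(A) = min{ad/(bc), bc/(ad)}`. -/
noncomputable def psiM (M : Matrix (Fin 2) (Fin 2) ℝ) : ℝ :=
  min (M 0 0 * M 1 1 / (M 0 1 * M 1 0)) (M 0 1 * M 1 0 / (M 0 0 * M 1 1))

/-- The Birkhoff contraction coefficient `τ(A) = (1 − √ψ(A))/(1 + √ψ(A))`. -/
noncomputable def tauM (M : Matrix (Fin 2) (Fin 2) ℝ) : ℝ :=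
  (1 - Real.sqrt (psiM M)) / (1 + Real.sqrt (psiM M))

/-- The Hilbert projective metric in coordinates on `(0,1)`. -/
noncomputable def hilbMetric (x y : ℝ) : ℝ :=
  |Real.log (x * (1 - y) / (y * (1 - x)))|

/-!
In the log-odds coordinate `t = log (x / (1 - x))` the Hilbert metric on `(0, 1)` is `|s - t|`, and
the action of a positive matrix has derivative at most `τ(A)` in absolute value (AM–GM), so it is
`τ(A)`-Lipschitz (Birkhoff). Averaging therefore multiplies the Lipschitz constant of a function by
at most `∑ i, ‖p i‖ τ(A i)`. If this is smaller than `‖λ‖`, the eigenvalue equation improves the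
Lipschitz constant of `f` by a fixed factor less than `1` indefinitely; then `f` is constant, and
`λ = ∑ i, p i`.
-/

open Real
open scoped NNReal Topology

section Lipschitz

variable {X Y E ι 𝕜 : Type*} [PseudoMetricSpace X] {K r : ℝ≥0}

lemma lipschitzWith_zero_of_forall_mul [MetricSpace Y] {f : X → Y} (hf : LipschitzWith K f)
    (hr : r < 1) (improve : ∀ L, LipschitzWith L f → LipschitzWith (r * L) f) :
    LipschitzWith 0 f := by
  have geometric (n : ℕ) : LipschitzWith (r ^ n * K) f := by
    induction n with
    | zero => simpa using hf
    | succ n ih => simpa only [pow_succ', mul_assoc] using improve _ ih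
  refine (LipschitzWith.zero_iff f).2 fun x y ↦ dist_le_zero.1 ?_
  have hlim : Filter.Tendsto (fun n : ℕ ↦ (r : ℝ) ^ n * (K * dist x y)) Filter.atTop (𝓝 0) := by
    simpa only [zero_mul] using
      (tendsto_pow_atTop_nhds_zero_of_lt_one r.coe_nonneg hr).mul_const (K * dist x y)
  refine ge_of_tendsto' hlim fun n ↦ ?_
  simpa only [NNReal.coe_mul, NNReal.coe_pow, mul_assoc] using (geometric n).dist_le_mul x y

variable [Fintype ι] [NormedField 𝕜] [NormedAddCommGroup E] [NormedSpace 𝕜 E]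
  {τ : ι → ℝ≥0} {p : ι → 𝕜}

lemma lipschitzWith_sum_smul_comp [PseudoMetricSpace Y] {f : Y → E} {g : ι → X → Y}
    (hf : LipschitzWith K f) (hg : ∀ i, LipschitzWith (τ i) (g i)) :
    LipschitzWith ((∑ i, ‖p i‖₊ * τ i) * K) fun x ↦ ∑ i, p i • f (g i x) := by
  refine LipschitzWith.of_dist_le_mul fun x y ↦ ?_
  calc dist (∑ i, p i • f (g i x)) (∑ i, p i • f (g i y))
      ≤ ∑ i, ‖p i‖ * dist (f (g i x)) (f (g i y)) := by
        simpa only [dist_smul₀] using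
          dist_sum_sum_le Finset.univ (fun i ↦ p i • f (g i x)) fun i ↦ p i • f (g i y)
    _ ≤ ∑ i, ‖p i‖ * (K * τ i * dist x y) := by
        gcongr with i
        exact (hf.comp (hg i)).dist_le_mul x y
    _ = ↑((∑ i, ‖p i‖₊ * τ i) * K) * dist x y := by
        push_cast
        simp only [Finset.sum_mul]
        exact Finset.sum_congr rfl fun i _ ↦ by ring

variable {f : X → E} {g : ι → X → X} {lam : 𝕜}

lemma lipschitzWith_zero_of_sum_smul_comp_eq_smul (hf : LipschitzWith K f)
    (hg : ∀ i, LipschitzWith (τ i) (g i)) (heig : ∀ x, ∑ i, p i • f (g i x) = lam • f x)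
    (hlt : ∑ i, ‖p i‖₊ * τ i < ‖lam‖₊) : LipschitzWith 0 f := by
  have hlam : 0 < ‖lam‖₊ := pos_of_gt hlt
  refine lipschitzWith_zero_of_forall_mul hf ((div_lt_one hlam).2 hlt) fun L hL ↦
    LipschitzWith.of_dist_le_mul fun x y ↦ ?_
  have h := (lipschitzWith_sum_smul_comp (p := p) hL hg).dist_le_mul x y
  rw [heig, heig, dist_smul₀, mul_comm, ← le_div_iff₀ (by exact_mod_cast hlam)] at h
  refine h.trans_eq ?_
  push_cast
  ring

theorem nnnorm_le_of_sum_smul_comp_eq_smul (hf : LipschitzWith K f)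
    (hg : ∀ i, LipschitzWith (τ i) (g i)) (heig : ∀ x, ∑ i, p i • f (g i x) = lam • f x)
    (hne : ∃ x, f x ≠ 0) (hlam : lam ≠ ∑ i, p i) : ‖lam‖₊ ≤ ∑ i, ‖p i‖₊ * τ i := by
  by_contra! hlt
  have hconst := (LipschitzWith.zero_iff f).1
    (lipschitzWith_zero_of_sum_smul_comp_eq_smul hf hg heig hlt)
  obtain ⟨x, hx⟩ := hne
  refine hlam (smul_left_injective 𝕜 hx ?_)
  calc lam • f x = ∑ i, p i • f (g i x) := (heig x).symm
    _ = (∑ i, p i) • f x := by simp only [hconst _ x, Finset.sum_smul]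

end Lipschitz

lemma hilbMetric_sigmoid (s t : ℝ) : hilbMetric (sigmoid s) (sigmoid t) = |s - t| := by
  have hs := (sigmoid_pos s).ne'
  have ht := (sigmoid_pos t).ne'
  have ratio : sigmoid s * (1 - sigmoid t) / (sigmoid t * (1 - sigmoid s)) = exp (s - t) := by
    rw [← sigmoid_neg, ← sigmoid_neg, ← sigmoid_mul_rexp_neg, ← sigmoid_mul_rexp_neg, exp_sub,
      exp_neg, exp_neg]
    field_simp
  rw [hilbMetric, ratio, log_exp]

lemma sigmoid_log_sub_log {x y : ℝ} (hx : 0 < x) (hy : 0 < y) :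
    sigmoid (log x - log y) = x / (x + y) := by
  rw [sigmoid_def, neg_sub, exp_sub, exp_log hx, exp_log hy]
  field_simp

lemma phiM_div_add (M : Matrix (Fin 2) (Fin 2) ℝ) {x y : ℝ} (hxy : x + y ≠ 0) :
    phiM M (x / (x + y))
      = (M 0 0 * x + M 0 1 * y) / ((M 0 0 * x + M 0 1 * y) + (M 1 0 * x + M 1 1 * y)) := by
  rw [phiM, ← div_div_div_cancel_right₀ hxy (M 0 0 * x + M 0 1 * y)]
  congr 1 <;> field_simp <;> ring

/-- The projective action `φ̃_M` read in the log-odds coordinate `t = log (x / (1 - x))`, whose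
inverse is `Real.sigmoid`. -/
noncomputable def logOddsAction (M : Matrix (Fin 2) (Fin 2) ℝ) (t : ℝ) : ℝ :=
  log (M 0 0 * exp t + M 0 1) - log (M 1 0 * exp t + M 1 1)

lemma sqrt_min_div_div {u v : ℝ} (hu : 0 < u) (huv : u ≤ v) :
    √(min (u / v) (v / u)) = √u / √v := by
  have hv : 0 < v := hu.trans_le huv
  have hle : u / v ≤ v / u := ((div_le_one hv).2 huv).trans ((one_le_div hu).2 huv)
  rw [min_eq_left hle, sqrt_div hu.le]

lemma one_sub_sqrt_min_div_one_add {u v : ℝ} (hu : 0 < u) (hv : 0 < v) :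
    (1 - √(min (u / v) (v / u))) / (1 + √(min (u / v) (v / u))) = |√u - √v| / (√u + √v) := by
  wlog huv : u ≤ v generalizing u v
  · rw [min_comm, abs_sub_comm, add_comm √u]
    exact this hv hu (le_of_not_ge huv)
  rw [sqrt_min_div_div hu huv, abs_sub_comm, abs_of_nonneg (sub_nonneg.2 (sqrt_le_sqrt huv))]
  field_simp
  ring

lemma sq_sqrt_mul_add_sqrt_mul_mul_le {a b c d : ℝ} (ha : 0 ≤ a) (hb : 0 ≤ b) (hc : 0 ≤ c)
    (hd : 0 ≤ d) (u : ℝ) :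
    (√(a * d) + √(b * c)) ^ 2 * u ≤ (a * u + b) * (c * u + d) :=
  calc (√(a * d) + √(b * c)) ^ 2 * u = (√a * √d + √b * √c) ^ 2 * u := by
        rw [sqrt_mul ha, sqrt_mul hb]
    _ ≤ (√a * √d + √b * √c) ^ 2 * u + (√a * √c * u - √b * √d) ^ 2 :=
        le_add_of_nonneg_right (sq_nonneg _)
    _ = (√a ^ 2 * u + √b ^ 2) * (√c ^ 2 * u + √d ^ 2) := by ring
    _ = (a * u + b) * (c * u + d) := by rw [sq_sqrt ha, sq_sqrt hb, sq_sqrt hc, sq_sqrt hd]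

lemma abs_mul_div_sub_mul_div_le {a b c d u : ℝ} (ha : 0 < a) (hb : 0 < b) (hc : 0 < c)
    (hd : 0 < d) (hu : 0 < u) :
    |a * u / (a * u + b) - c * u / (c * u + d)|
      ≤ |√(a * d) - √(b * c)| / (√(a * d) + √(b * c)) := by
  have hsum : 0 < √(a * d) + √(b * c) := by positivity
  have hden : 0 < (a * u + b) * (c * u + d) := by positivity
  have hdet : a * d - b * c = (√(a * d) - √(b * c)) * (√(a * d) + √(b * c)) := by
    rw [mul_comm (_ - _), ← sq_sub_sq, sq_sqrt (mul_pos ha hd).le, sq_sqrt (mul_pos hb hc).le]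
  calc |a * u / (a * u + b) - c * u / (c * u + d)|
      = |(a * d - b * c) * u / ((a * u + b) * (c * u + d))| := by
        rw [div_sub_div _ _ (by positivity) (by positivity)]
        congr 2
        ring
    _ = |√(a * d) - √(b * c)| * ((√(a * d) + √(b * c)) * u)
          / ((a * u + b) * (c * u + d)) := by
        rw [hdet, mul_assoc, abs_div, abs_mul, abs_of_pos (mul_pos hsum hu), abs_of_pos hden]
    _ ≤ |√(a * d) - √(b * c)| / (√(a * d) + √(b * c)) := by
        rw [div_le_div_iff₀ hden hsum, mul_assoc]
        refine mul_le_mul_of_nonneg_left ?_ (abs_nonneg _)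
        linarith [sq_sqrt_mul_add_sqrt_mul_mul_le ha.le hb.le hc.le hd.le u]

section PositiveMatrix

variable {M : Matrix (Fin 2) (Fin 2) ℝ}

lemma phiM_sigmoid (hM : ∀ i j, 0 < M i j) (t : ℝ) :
    phiM M (sigmoid t) = sigmoid (logOddsAction M t) := by
  have hnum : 0 < M 0 0 * exp t + M 0 1 := add_pos (mul_pos (hM 0 0) (exp_pos t)) (hM 0 1)
  have hden : 0 < M 1 0 * exp t + M 1 1 := add_pos (mul_pos (hM 1 0) (exp_pos t)) (hM 1 1)
  have ht : sigmoid t = exp t / (exp t + 1) := by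
    simpa only [log_exp, log_one, sub_zero] using sigmoid_log_sub_log (exp_pos t) one_pos
  rw [ht, phiM_div_add M (by positivity), logOddsAction, sigmoid_log_sub_log hnum hden]
  simp only [mul_one]

lemma tauM_eq (hM : ∀ i j, 0 < M i j) :
    tauM M = |√(M 0 0 * M 1 1) - √(M 0 1 * M 1 0)| / (√(M 0 0 * M 1 1) + √(M 0 1 * M 1 0)) :=
  one_sub_sqrt_min_div_one_add (mul_pos (hM 0 0) (hM 1 1)) (mul_pos (hM 0 1) (hM 1 0))

lemma tauM_nonneg (hM : ∀ i j, 0 < M i j) : 0 ≤ tauM M := by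
  rw [tauM_eq hM]
  positivity

lemma hasDerivAt_logOddsAction (hM : ∀ i j, 0 < M i j) (t : ℝ) :
    HasDerivAt (logOddsAction M) (M 0 0 * exp t / (M 0 0 * exp t + M 0 1)
      - M 1 0 * exp t / (M 1 0 * exp t + M 1 1)) t := by
  have hlog (i : Fin 2) : HasDerivAt (fun s ↦ log (M i 0 * exp s + M i 1))
      (M i 0 * exp t / (M i 0 * exp t + M i 1)) t :=
    (((hasDerivAt_exp t).const_mul _).add_const _).log
      (add_pos (mul_pos (hM i 0) (exp_pos t)) (hM i 1)).ne'
  exact (hlog 0).sub (hlog 1)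

theorem lipschitzWith_logOddsAction (hM : ∀ i j, 0 < M i j) :
    LipschitzWith (tauM M).toNNReal (logOddsAction M) := by
  refine lipschitzWith_of_nnnorm_deriv_le
    (fun t ↦ (hasDerivAt_logOddsAction hM t).differentiableAt) fun t ↦ ?_
  rw [(hasDerivAt_logOddsAction hM t).deriv, ← NNReal.coe_le_coe, coe_nnnorm, norm_eq_abs,
    coe_toNNReal _ (tauM_nonneg hM), tauM_eq hM]
  exact abs_mul_div_sub_mul_div_le (hM 0 0) (hM 0 1) (hM 1 0) (hM 1 1) (exp_pos t)

end PositiveMatrix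

theorem stmt12_general {ι 𝕜 E : Type*} [Fintype ι] [NormedField 𝕜] [NormedAddCommGroup E]
    [NormedSpace 𝕜 E] (A : ι → Matrix (Fin 2) (Fin 2) ℝ) (hpos : ∀ i s t, 0 < A i s t)
    (p : ι → 𝕜) (f : ℝ → E) (hne : ∃ x ∈ Set.Ioo (0 : ℝ) 1, f x ≠ 0) (K : ℝ)
    (hlip : ∀ x ∈ Set.Ioo (0 : ℝ) 1, ∀ y ∈ Set.Ioo (0 : ℝ) 1,
      ‖f x - f y‖ ≤ K * hilbMetric x y)
    (lam : 𝕜) (hlam : lam ≠ ∑ i, p i)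
    (heig : ∀ x ∈ Set.Ioo (0 : ℝ) 1, ∑ i, p i • f (phiM (A i) x) = lam • f x) :
    ‖lam‖ ≤ ∑ i, ‖p i‖ * tauM (A i) := by
  simp only [← range_sigmoid, Set.forall_mem_range, Set.exists_range_iff] at hne hlip heig
  have hf : LipschitzWith K.toNNReal (f ∘ sigmoid) := LipschitzWith.of_dist_le' fun s t ↦ by
    simpa only [Function.comp_apply, dist_eq_norm, norm_eq_abs, hilbMetric_sigmoid] using hlip s t
  have heig_sigmoid (t : ℝ) : ∑ i, p i • (f ∘ sigmoid) (logOddsAction (A i) t)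
      = lam • (f ∘ sigmoid) t := by
    simpa only [Function.comp_apply, phiM_sigmoid (hpos _)] using heig t
  have hle := nnnorm_le_of_sum_smul_comp_eq_smul hf
    (fun i ↦ lipschitzWith_logOddsAction (hpos i)) heig_sigmoid hne hlam
  simpa only [← NNReal.coe_le_coe, NNReal.coe_sum, NNReal.coe_mul, coe_nnnorm,
    coe_toNNReal _ (tauM_nonneg (hpos _))] using hle

theorem stmt12 {k : ℕ} (hk : 1 ≤ k) (A : Fin k → Matrix (Fin 2) (Fin 2) ℝ)
    (hpos : ∀ i s t, 0 < A i s t) (hinv : ∀ i, IsUnit (A i))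
    (p : Fin k → ℝ) (hp : ∀ i, 0 ≤ p i) (hps : ∑ i, p i = 1)
    (f : ℝ → ℝ) (hne : ∃ x ∈ Set.Ioo (0 : ℝ) 1, f x ≠ 0)
    (K : ℝ) (hK : 0 ≤ K)
    (hlip : ∀ x ∈ Set.Ioo (0 : ℝ) 1, ∀ y ∈ Set.Ioo (0 : ℝ) 1,
      |f x - f y| ≤ K * hilbMetric x y)
    (lam : ℝ) (hlam : lam ≠ 1)
    (heig : ∀ x ∈ Set.Ioo (0 : ℝ) 1, ∑ i, p i * f (phiM (A i) x) = lam * f x) :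
    |lam| ≤ ∑ i, p i * tauM (A i) := by
  have h := stmt12_general A hpos p f hne K hlip lam (hps ▸ hlam) heig
  simpa only [norm_eq_abs, abs_of_nonneg (hp _)] using h
end

section
/- Let f : ℂ → ℂ be holomorphic (complex differentiable) on D and suppose that f(z) = Σ_{i=1}^k p_i f(φ_{A_i}(z)) for every z ∈ D. Then f is constant on D. -/
open Complex

/-- The complex projective action `φ_A` of a positive 2×2 matrix `A` on the disc `D`. -/
noncomputable def phiMC (M : Matrix (Fin 2) (Fin 2) ℝ) (z : ℂ) : ℂ :=
  (((M 0 0 : ℂ) - M 0 1) * z + (M 0 1 : ℂ)) /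
    (((M 0 0 : ℂ) + M 1 0 - M 0 1 - M 1 1) * z + (M 0 1 : ℂ) + M 1 1)

/-!
In the coordinate `w = z / (1 - z)` the disc `D` is the right half-plane and `φ_A` is the Möbius
map `w ↦ (a w + b) / (c w + d)`; positivity of the entries makes it send the closed disc into the
open one. The images of the closed disc therefore form a compact set `K ⊆ D`, and the functional
equation puts every value of `f` on `D` in the convex hull of `f(K)`. Hence the modulus of each
continuous linear functional of `f` attains its supremum over `D` at a point of `K`, and the
maximum modulus principle applies.
-/

open Metric
open scoped ComplexConjugate

theorem norm_apply_le_of_mem_closedConvexHull {F G : Type*} [NormedAddCommGroup F]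
    [NormedSpace ℝ F] [NormedAddCommGroup G] [NormedSpace ℝ G] {s : Set F} {x : F} {C : ℝ}
    (T : F →L[ℝ] G) (hs : ∀ y ∈ s, ‖T y‖ ≤ C) (hx : x ∈ closedConvexHull ℝ s) : ‖T x‖ ≤ C := by
  have hconvex : Convex ℝ (T ⁻¹' closedBall 0 C) :=
    (convex_closedBall 0 C).linear_preimage T.toLinearMap
  have hclosed : IsClosed (T ⁻¹' closedBall 0 C) := isClosed_closedBall.preimage T.continuous
  have hsub : s ⊆ T ⁻¹' closedBall 0 C := fun y hy => mem_closedBall_zero_iff.2 (hs y hy)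
  exact mem_closedBall_zero_iff.1 (closedConvexHull_min hsub hconvex hclosed hx)

theorem eq_of_mapsTo_closedConvexHull_image {E F : Type*} [NormedAddCommGroup E]
    [NormedSpace ℂ E] [NormedAddCommGroup F] [NormedSpace ℂ F] {f : E → F} {U K : Set E}
    (hUo : IsOpen U) (hUc : IsPreconnected U) (hf : DifferentiableOn ℂ f U) (hK : IsCompact K)
    (hKU : K ⊆ U) (hfK : Set.MapsTo f U (closedConvexHull ℝ (f '' K))) {z w : E} (hz : z ∈ U)
    (hw : w ∈ U) : f z = f w := by
  have hKne : K.Nonempty := by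
    rw [Set.nonempty_iff_ne_empty]
    rintro rfl
    simpa [closedConvexHull_eq_closure_convexHull] using hfK hz
  refine (SeparatingDual.eq_iff_forall_dual_eq (R := ℂ)).2 fun ℓ => ?_
  have hℓf : DifferentiableOn ℂ (ℓ ∘ f) U := ℓ.differentiable.comp_differentiableOn hf
  obtain ⟨z₀, hz₀, hmaxK⟩ := hK.exists_isMaxOn hKne (hℓf.continuousOn.mono hKU).norm
  have hmaxU : IsMaxOn (norm ∘ (ℓ ∘ f)) U z₀ := fun y hy =>
    norm_apply_le_of_mem_closedConvexHull (ℓ.restrictScalars ℝ)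
      (Set.forall_mem_image.2 hmaxK) (hfK hy)
  have hconst := Complex.eqOn_of_isPreconnected_of_isMaxOn_norm hUc hUo hℓf (hKU hz₀) hmaxU
  exact (hconst hz).trans (hconst hw).symm

theorem half_sq_sub_norm_sub_half_sq (z : ℂ) :
    (1 / 2 : ℝ) ^ 2 - ‖z - 1 / 2‖ ^ 2 = (z * conj (1 - z)).re := by
  simp only [Complex.sq_norm, normSq_apply, mul_re, sub_re, sub_im, conj_re, conj_im, one_re,
    one_im, div_ofNat_re, div_ofNat_im]
  ring

theorem mem_ball_half_iff_re_mul_conj_pos {z : ℂ} :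
    z ∈ ball (1 / 2 : ℂ) (1 / 2) ↔ 0 < (z * conj (1 - z)).re := by
  rw [← half_sq_sub_norm_sub_half_sq, sub_pos, sq_lt_sq₀ (norm_nonneg _) (by norm_num),
    mem_ball_iff_norm]

theorem mem_closedBall_half_iff_re_mul_conj_nonneg {z : ℂ} :
    z ∈ closedBall (1 / 2 : ℂ) (1 / 2) ↔ 0 ≤ (z * conj (1 - z)).re := by
  rw [← half_sq_sub_norm_sub_half_sq, sub_nonneg, sq_le_sq₀ (norm_nonneg _) (by norm_num),
    mem_closedBall_iff_norm]

theorem add_ne_zero_of_re_mul_conj_pos {u v : ℂ} (h : 0 < (u * conj v).re) : u + v ≠ 0 := by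
  intro huv
  obtain rfl : u = -v := eq_neg_of_add_eq_zero_left huv
  rw [neg_mul, mul_conj, neg_re, ofReal_re] at h
  linarith [normSq_nonneg v]

theorem div_add_mem_ball_half {u v : ℂ} (h : 0 < (u * conj v).re) :
    u / (u + v) ∈ ball (1 / 2 : ℂ) (1 / 2) := by
  have huv : u + v ≠ 0 := add_ne_zero_of_re_mul_conj_pos h
  have hsub : 1 - u / (u + v) = v / (u + v) := by
    rw [one_sub_div huv, add_sub_cancel_left]
  rw [mem_ball_half_iff_re_mul_conj_pos, hsub, map_div₀, div_mul_div_comm, mul_conj,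
    div_ofReal_re]
  exact div_pos h (normSq_pos.2 huv)

theorem re_mul_conj_pos_of_mem_closedBall_half {a b c d : ℝ} (ha : 0 < a) (hb : 0 < b)
    (hc : 0 < c) (hd : 0 < d) {z : ℂ} (hz : z ∈ closedBall (1 / 2 : ℂ) (1 / 2)) :
    0 < ((a * z + b * (1 - z)) * conj (c * z + d * (1 - z))).re := by
  have hexpand : ((a * z + b * (1 - z)) * conj (c * z + d * (1 - z))).re =
      a * c * normSq z + b * d * normSq (1 - z) + (a * d + b * c) * (z * conj (1 - z)).re := by
    simp only [normSq_apply, mul_re, mul_im, add_re, add_im, sub_re, sub_im, conj_re, conj_im,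
      one_re, one_im, ofReal_re, ofReal_im]
    ring
  have hcross : 0 ≤ (a * d + b * c) * (z * conj (1 - z)).re :=
    mul_nonneg (by positivity) (mem_closedBall_half_iff_re_mul_conj_nonneg.1 hz)
  have hsquares : 0 < a * c * normSq z + b * d * normSq (1 - z) := by
    rcases eq_or_ne z 0 with rfl | hz0
    · simpa using mul_pos hb hd
    · exact add_pos_of_pos_of_nonneg (mul_pos (by positivity) (normSq_pos.2 hz0))
        (mul_nonneg (by positivity) (normSq_nonneg _))
  rw [hexpand]
  exact add_pos_of_pos_of_nonneg hsquares hcross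

theorem phiMC_eq_div_add (M : Matrix (Fin 2) (Fin 2) ℝ) (z : ℂ) :
    phiMC M z = (M 0 0 * z + M 0 1 * (1 - z)) /
      ((M 0 0 * z + M 0 1 * (1 - z)) + (M 1 0 * z + M 1 1 * (1 - z))) := by
  unfold phiMC
  congr 1 <;> ring

theorem mapsTo_phiMC_closedBall_ball {M : Matrix (Fin 2) (Fin 2) ℝ} (hM : ∀ s t, 0 < M s t) :
    Set.MapsTo (phiMC M) (closedBall (1 / 2 : ℂ) (1 / 2)) (ball (1 / 2) (1 / 2)) := by
  intro z hz
  rw [phiMC_eq_div_add]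
  exact div_add_mem_ball_half (re_mul_conj_pos_of_mem_closedBall_half
    (hM 0 0) (hM 0 1) (hM 1 0) (hM 1 1) hz)

theorem continuousOn_phiMC_closedBall {M : Matrix (Fin 2) (Fin 2) ℝ} (hM : ∀ s t, 0 < M s t) :
    ContinuousOn (phiMC M) (closedBall (1 / 2 : ℂ) (1 / 2)) := by
  rw [funext (phiMC_eq_div_add M)]
  exact ContinuousOn.div (by fun_prop) (by fun_prop) fun z hz =>
    add_ne_zero_of_re_mul_conj_pos (re_mul_conj_pos_of_mem_closedBall_half
      (hM 0 0) (hM 0 1) (hM 1 0) (hM 1 1) hz)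

theorem stmt16_general {ι F : Type*} [Fintype ι] [NormedAddCommGroup F] [NormedSpace ℂ F]
    (A : ι → Matrix (Fin 2) (Fin 2) ℝ) (hpos : ∀ i s t, 0 < A i s t)
    (p : ι → ℝ) (hp : ∀ i, 0 ≤ p i) (hps : ∑ i, p i = 1)
    (f : ℂ → F) (hf : DifferentiableOn ℂ f (ball (1 / 2 : ℂ) (1 / 2)))
    (heq : ∀ z ∈ ball (1 / 2 : ℂ) (1 / 2), f z = ∑ i, p i • f (phiMC (A i) z)) :
    ∀ z ∈ ball (1 / 2 : ℂ) (1 / 2), ∀ w ∈ ball (1 / 2 : ℂ) (1 / 2), f z = f w := by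
  let K : Set ℂ := ⋃ i, phiMC (A i) '' closedBall (1 / 2) (1 / 2)
  have hK : IsCompact K := isCompact_iUnion fun i =>
    (isCompact_closedBall _ _).image_of_continuousOn (continuousOn_phiMC_closedBall (hpos i))
  have hKD : K ⊆ ball (1 / 2) (1 / 2) :=
    Set.iUnion_subset fun i => (mapsTo_phiMC_closedBall_ball (hpos i)).image_subset
  have hfK : Set.MapsTo f (ball (1 / 2) (1 / 2)) (closedConvexHull ℝ (f '' K)) := by
    intro z hz
    rw [heq z hz]
    refine convex_closedConvexHull.sum_mem (fun i _ => hp i) hps fun i _ =>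
      subset_closedConvexHull (Set.mem_image_of_mem f ?_)
    exact Set.mem_iUnion_of_mem i (Set.mem_image_of_mem _ (ball_subset_closedBall hz))
  intro z hz w hw
  exact eq_of_mapsTo_closedConvexHull_image isOpen_ball (convex_ball _ _).isPreconnected
    hf hK hKD hfK hz hw

theorem stmt16 {k : ℕ} (hk : 1 ≤ k) (A : Fin k → Matrix (Fin 2) (Fin 2) ℝ)
    (hpos : ∀ i s t, 0 < A i s t) (hinv : ∀ i, IsUnit (A i))
    (p : Fin k → ℝ) (hp : ∀ i, 0 ≤ p i) (hps : ∑ i, p i = 1)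
    (f : ℂ → ℂ) (hf : DifferentiableOn ℂ f (Metric.ball ((1 : ℂ) / 2) (1 / 2)))
    (heq : ∀ z ∈ Metric.ball ((1 : ℂ) / 2) (1 / 2),
      f z = ∑ i, (p i : ℂ) * f (phiMC (A i) z)) :
    ∀ z ∈ Metric.ball ((1 : ℂ) / 2) (1 / 2),
      ∀ w ∈ Metric.ball ((1 : ℂ) / 2) (1 / 2), f z = f w :=
  stmt16_general A hpos p hp hps f hf (by simpa only [real_smul] using heq)
end

section
/- There is no function f : ℂ → ℂ, holomorphic (complex differentiable) on D, such that Σ_{i=1}^k p_i f(φ_{A_i}(z)) = 1 + f(z) for every z ∈ D. -/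
open Complex

/-!
On the real segment `[0, 1]` each `φ_{A_i}` is the projective action of `A_i` on probability
vectors `(x, 1 - x)`, so it maps `[0, 1]` into `(0, 1)`. The compact set `K = ⋃ i, φ_{A_i}([0, 1])`
therefore lies in `(0, 1)` and is mapped into itself by every `φ_{A_i}`. At a point of `K` where
`Re f` is maximal, the average of the `Re f ∘ φ_{A_i}` is at most `Re f`, and cannot be `1 + Re f`.
-/

open Set
open scoped Matrix

section InvariantCompact

variable {X ι : Type*} [TopologicalSpace X]

theorem exists_isCompact_forall_mapsTo_self [Finite ι] [Nonempty ι] {φ : ι → X → X} {S U : Set X}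
    (hS : IsCompact S) (hSne : S.Nonempty) (hφ : ∀ i, ContinuousOn (φ i) S)
    (hmaps : ∀ i, MapsTo (φ i) S U) (hUS : U ⊆ S) :
    ∃ K ⊆ U, IsCompact K ∧ K.Nonempty ∧ ∀ i, MapsTo (φ i) K K := by
  have hKU : ⋃ i, φ i '' S ⊆ U := iUnion_subset fun i => (hmaps i).image_subset
  refine ⟨⋃ i, φ i '' S, hKU, isCompact_iUnion fun i => hS.image_of_continuousOn (hφ i),
    nonempty_iUnion.2 ⟨Classical.arbitrary ι, hSne.image _⟩, fun i x hx => ?_⟩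
  exact mem_iUnion_of_mem i (mem_image_of_mem _ (hUS (hKU hx)))

theorem exists_sum_mul_comp_le_of_isCompact [Fintype ι] {K : Set X} (hK : IsCompact K)
    (hKne : K.Nonempty) {φ : ι → X → X} (hφ : ∀ i, MapsTo (φ i) K K) {g : X → ℝ}
    (hg : UpperSemicontinuousOn g K) {w : ι → ℝ} (hw : ∀ i, 0 ≤ w i) (hw₁ : ∑ i, w i = 1) :
    ∃ x ∈ K, ∑ i, w i * g (φ i x) ≤ g x := by
  obtain ⟨x, hx, hmax⟩ := hg.exists_isMaxOn hKne hK
  exact ⟨x, hx, (convex_Iic (g x)).sum_mem (fun i _ => hw i) hw₁ fun i _ => hmax (hφ i hx)⟩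

end InvariantCompact

theorem mulVec_pos {m n R : Type*} [Fintype n] [Semiring R] [PartialOrder R]
    [IsStrictOrderedRing R] {M : Matrix m n R} (hM : ∀ i j, 0 < M i j) {v : n → R} (hv : 0 < v)
    (i : m) : 0 < (M *ᵥ v) i := by
  obtain ⟨hv_nonneg, j, hj⟩ := Pi.lt_def.1 hv
  exact Finset.sum_pos' (fun j _ => mul_nonneg (hM i j).le (hv_nonneg j))
    ⟨j, Finset.mem_univ j, mul_pos (hM i j) hj⟩

/-- The projective action of a `2 × 2` real matrix on the unit interval: `x` stands for the
probability vector `(x, 1 - x)`, and `M` sends it to the first coordinate of the normalisation of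
`M (x, 1 - x)` to a vector of coordinate sum `1`. -/
noncomputable def unitIntervalAction (M : Matrix (Fin 2) (Fin 2) ℝ) (x : ℝ) : ℝ :=
  (M *ᵥ ![x, 1 - x]) 0 / ((M *ᵥ ![x, 1 - x]) 0 + (M *ᵥ ![x, 1 - x]) 1)

theorem phiMC_ofReal (M : Matrix (Fin 2) (Fin 2) ℝ) (x : ℝ) :
    phiMC M x = unitIntervalAction M x := by
  have hcoord (i : Fin 2) : (M *ᵥ ![x, 1 - x]) i = M i 0 * x + M i 1 * (1 - x) := by
    simp [Matrix.mulVec, dotProduct]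
  rw [phiMC, unitIntervalAction, hcoord, hcoord]
  push_cast
  congr 1 <;> ring

theorem mulVec_pos_of_mem_Icc {m : Type*} {M : Matrix m (Fin 2) ℝ} (hM : ∀ i j, 0 < M i j)
    {x : ℝ} (hx : x ∈ Icc (0 : ℝ) 1) (i : m) : 0 < (M *ᵥ ![x, 1 - x]) i := by
  refine mulVec_pos hM (lt_of_le_of_ne (Fin.forall_fin_two.2 ⟨hx.1, sub_nonneg.2 hx.2⟩) ?_) i
  intro hzero
  have hx₀ : 0 = x := congrFun hzero 0
  have hx₁ : 0 = 1 - x := congrFun hzero 1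
  linarith

theorem mapsTo_unitIntervalAction {M : Matrix (Fin 2) (Fin 2) ℝ}
    (hM : ∀ i j, 0 < M i j) : MapsTo (unitIntervalAction M) (Icc 0 1) (Ioo 0 1) := by
  intro x hx
  have h₀ := mulVec_pos_of_mem_Icc hM hx 0
  have h₁ := mulVec_pos_of_mem_Icc hM hx 1
  exact ⟨div_pos h₀ (add_pos h₀ h₁), (div_lt_one (add_pos h₀ h₁)).2 (lt_add_of_pos_right _ h₁)⟩

theorem continuousOn_unitIntervalAction {M : Matrix (Fin 2) (Fin 2) ℝ}
    (hM : ∀ i j, 0 < M i j) : ContinuousOn (unitIntervalAction M) (Icc 0 1) := by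
  refine ContinuousOn.div (by fun_prop) (by fun_prop) fun x hx => ?_
  exact (add_pos (mulVec_pos_of_mem_Icc hM hx 0) (mulVec_pos_of_mem_Icc hM hx 1)).ne'

theorem ofReal_mem_ball_half {x : ℝ} (hx : x ∈ Ioo (0 : ℝ) 1) :
    (x : ℂ) ∈ Metric.ball ((1 : ℂ) / 2) (1 / 2) := by
  have hball : x ∈ Metric.ball (1 / 2 : ℝ) (1 / 2) := by
    rw [Real.ball_eq_Ioo]
    convert hx using 2 <;> norm_num
  simpa using isometry_ofReal.mapsTo_ball (1 / 2) (1 / 2) hball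

theorem stmt17_general {ι : Type*} [Fintype ι] (A : ι → Matrix (Fin 2) (Fin 2) ℝ)
    (hpos : ∀ i s t, 0 < A i s t) (p : ι → ℝ) (hp : ∀ i, 0 ≤ p i) (hps : ∑ i, p i = 1) :
    ¬ ∃ f : ℂ → ℂ, ContinuousOn (fun x : ℝ => f x) (Ioo 0 1) ∧
      ∀ x ∈ Ioo (0 : ℝ) 1, ∑ i, (p i : ℂ) * f (phiMC (A i) x) = 1 + f x := by
  rintro ⟨f, hf, heq⟩
  have : Nonempty ι := by
    by_contra! hι
    simp at hps
  obtain ⟨K, hKU, hK, hKne, hKmaps⟩ := exists_isCompact_forall_mapsTo_self isCompact_Icc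
    (nonempty_Icc.2 zero_le_one) (fun i => continuousOn_unitIntervalAction (hpos i))
    (fun i => mapsTo_unitIntervalAction (hpos i)) Ioo_subset_Icc_self
  have hre : ContinuousOn (fun x : ℝ => (f x).re) K :=
    continuous_re.comp_continuousOn (hf.mono hKU)
  obtain ⟨x, hx, hle⟩ := exists_sum_mul_comp_le_of_isCompact hK hKne hKmaps
    hre.upperSemicontinuousOn hp hps
  have heq_re := congrArg re (heq x (hKU hx))
  simp only [phiMC_ofReal, re_sum, re_ofReal_mul, add_re, one_re] at heq_re
  linarith

theorem stmt17 {k : ℕ} (hk : 1 ≤ k) (A : Fin k → Matrix (Fin 2) (Fin 2) ℝ)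
    (hpos : ∀ i s t, 0 < A i s t) (hinv : ∀ i, IsUnit (A i))
    (p : Fin k → ℝ) (hp : ∀ i, 0 ≤ p i) (hps : ∑ i, p i = 1) :
    ¬ ∃ f : ℂ → ℂ, DifferentiableOn ℂ f (Metric.ball ((1 : ℂ) / 2) (1 / 2)) ∧
      ∀ z ∈ Metric.ball ((1 : ℂ) / 2) (1 / 2),
        ∑ i, (p i : ℂ) * f (phiMC (A i) z) = 1 + f z := by
  rintro ⟨f, hf, heq⟩
  exact stmt17_general A hpos p hp hps ⟨f, hf.continuousOn.comp continuous_ofReal.continuousOn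
    fun _ => ofReal_mem_ball_half, fun x hx => heq x (ofReal_mem_ball_half hx)⟩
end

section
/- For every integer n ≥ 1, if s₁ ≥ s₂ ≥ ⋯ are nonnegative reals with s_i ≤ C₀ r^i for all i ≥ 1, where C₀ ≥ 0 and 0 ≤ r < 1, then Σ_{1 ≤ i₁ < i₂ < ⋯ < i_n} s_{i₁} s_{i₂} ⋯ s_{i_n} ≤ C₀ⁿ · r^{n(n+1)/2} / ∏_{i=1}^n (1 − r^i). -/
/-!
Recording a strictly increasing tuple by its first entry and by the remaining entries, shifted down
by the excess of the first entry over the lower bound `m`, splits off one geometric series of ratio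
`q ^ (n + 1)`. Induction on the length evaluates the generating function
`∑_{m ≤ i₁ < ⋯ < i_n} q ^ (i₁ + ⋯ + i_n)` exactly, and the sum in the theorem is dominated
termwise by `C₀ ^ n` times this series with `m = 1` and `q = r`.
-/

/-- Strictly increasing `n`-tuples of natural numbers with entries at least `m`: the index set of
the series. The lower bound is a parameter because it grows in the induction on `n`. -/
abbrev StrictTuple (n m : ℕ) : Type :=
  {f : Fin n → ℕ // StrictMono f ∧ ∀ j, m ≤ f j}

namespace StrictTuple

/-- The decomposition of a tuple into its first entry `m + k` and its other entries, which are
shifted down by `k` so that their lower bound `m + 1` does not depend on `k`. -/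
def consShiftEquiv (n m : ℕ) : ℕ × StrictTuple n (m + 1) ≃ StrictTuple (n + 1) m where
  toFun p := ⟨Fin.cons (m + p.1) fun j => p.2.1 j + p.1,
    Fin.strictMono_cons.2
      ⟨fun j => Nat.add_lt_add_right (p.2.2.2 j) p.1, p.2.2.1.add_const p.1⟩,
    Fin.cases (Nat.le_add_right m p.1) fun j =>
      Nat.le_add_right_of_le (Nat.le_of_succ_le (p.2.2.2 j))⟩
  invFun f := (f.1 0 - m, ⟨fun j => f.1 j.succ - (f.1 0 - m), by
    obtain ⟨f, hf, hm⟩ := f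
    have h0 := hm 0
    refine ⟨fun i j hij => ?_, fun j => ?_⟩
    · have hi := hf i.succ_pos
      have hij' := hf (Fin.succ_lt_succ_iff.2 hij)
      lia
    · have hj := hf j.succ_pos
      lia⟩)
  left_inv p := by
    ext <;> simp
  right_inv f := by
    obtain ⟨f, hf, hm⟩ := f
    have h0 := hm 0
    ext j
    cases j using Fin.cases with
    | zero => exact Nat.add_sub_cancel' h0
    | succ j =>
      have hj := hf j.succ_pos
      exact Nat.sub_add_cancel ((Nat.sub_le _ _).trans hj.le)

theorem prod_pow_consShiftEquiv {M : Type*} [CommMonoid M] (q : M) {n m : ℕ}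
    (p : ℕ × StrictTuple n (m + 1)) :
    ∏ j, q ^ (consShiftEquiv n m p).1 j =
      q ^ m * ((q ^ (n + 1)) ^ p.1 * ∏ j, q ^ p.2.1 j) :=
  calc
    ∏ j, q ^ (consShiftEquiv n m p).1 j = q ^ (m + p.1) * ∏ j, q ^ (p.2.1 j + p.1) :=
      Fin.prod_univ_succ _
    _ = q ^ m * (q ^ p.1 * (q ^ p.1) ^ n * ∏ j, q ^ p.2.1 j) := by
      simp only [pow_add, Finset.prod_mul_distrib, Finset.prod_const, Finset.card_univ,
        Fintype.card_fin, mul_assoc, mul_comm]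
    _ = q ^ m * ((q ^ (n + 1)) ^ p.1 * ∏ j, q ^ p.2.1 j) := by
      rw [← pow_succ', pow_right_comm]

instance (m : ℕ) : Unique (StrictTuple 0 m) where
  default := ⟨Fin.elim0, fun i => i.elim0, fun j => j.elim0⟩
  uniq _ := Subsingleton.elim _ _

section NormedField

variable {K : Type*} [NormedField K] {q : K}

theorem summable_norm_prod_pow (hq : ‖q‖ < 1) (n m : ℕ) :
    Summable fun f : StrictTuple n m => ‖∏ j, q ^ f.1 j‖ := by
  induction n generalizing m with
  | zero => exact Summable.of_finite
  | succ n ih =>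
    have hratio : ‖q ^ (n + 1)‖ < 1 :=
      (norm_pow q _).trans_lt (pow_lt_one₀ (norm_nonneg q) hq n.succ_ne_zero)
    rw [← (consShiftEquiv n m).summable_iff]
    simpa only [Function.comp_def, prod_pow_consShiftEquiv, norm_mul] using
      ((summable_norm_geometric_of_norm_lt_one hratio).mul_norm (ih (m + 1))).mul_left ‖q ^ m‖

theorem hasSum_prod_pow [CompleteSpace K] (hq : ‖q‖ < 1) (n m : ℕ) :
    HasSum (fun f : StrictTuple n m => ∏ j, q ^ f.1 j)
      (q ^ (n * m + n.choose 2) / ∏ i ∈ Finset.range n, (1 - q ^ (i + 1))) := by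
  induction n generalizing m with
  | zero => simp
  | succ n ih =>
    have hratio : ‖q ^ (n + 1)‖ < 1 :=
      (norm_pow q _).trans_lt (pow_lt_one₀ (norm_nonneg q) hq n.succ_ne_zero)
    have hsummable := summable_mul_of_summable_norm
      (summable_norm_geometric_of_norm_lt_one hratio) (summable_norm_prod_pow hq n (m + 1))
    have hprod := (hasSum_geometric_of_norm_lt_one hratio).mul (ih (m + 1)) hsummable
    have hvalue : q ^ ((n + 1) * m + (n + 1).choose 2) /
          ∏ i ∈ Finset.range (n + 1), (1 - q ^ (i + 1)) =
        q ^ m * ((1 - q ^ (n + 1))⁻¹ *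
          (q ^ (n * (m + 1) + n.choose 2) / ∏ i ∈ Finset.range n, (1 - q ^ (i + 1)))) := by
      rw [Finset.prod_range_succ, Nat.choose_succ_succ' n 1, Nat.choose_one_right, div_eq_mul_inv,
        mul_inv]
      ring
    rw [hvalue, ← (consShiftEquiv n m).hasSum_iff]
    simpa only [Function.comp_def, prod_pow_consShiftEquiv] using hprod.mul_left (q ^ m)

end NormedField

theorem norm_prod_le_pow_mul_prod {R : Type*} [NormedCommRing R] [NormOneClass R] {s : ℕ → R}
    {C : ℝ} {b : ℕ → ℝ} {n m : ℕ} (hs : ∀ i, m ≤ i → ‖s i‖ ≤ C * b i) (f : StrictTuple n m) :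
    ‖∏ j, s (f.1 j)‖ ≤ C ^ n * ∏ j, b (f.1 j) :=
  calc
    ‖∏ j, s (f.1 j)‖ ≤ ∏ j, ‖s (f.1 j)‖ := Finset.norm_prod_le _ _
    _ ≤ ∏ j, (C * b (f.1 j)) :=
      Finset.prod_le_prod (fun _ _ => norm_nonneg _) fun j _ => hs _ (f.2.2 j)
    _ = C ^ n * ∏ j, b (f.1 j) := by
      rw [Finset.prod_mul_distrib, Finset.prod_const, Finset.card_univ, Fintype.card_fin]

end StrictTuple

theorem stmt19_general {R : Type*} [NormedCommRing R] [NormOneClass R] (n : ℕ) (s : ℕ → R)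
    (C₀ r : ℝ) (hr0 : 0 ≤ r) (hr1 : r < 1) (hbound : ∀ i, 1 ≤ i → ‖s i‖ ≤ C₀ * r ^ i) :
    Summable (fun f : StrictTuple n 1 => ‖∏ j, s (f.1 j)‖) ∧
      ∑' f : StrictTuple n 1, ‖∏ j, s (f.1 j)‖ ≤
        C₀ ^ n * r ^ (n * (n + 1) / 2) / ∏ i ∈ Finset.range n, (1 - r ^ (i + 1)) := by
  have hr : ‖r‖ < 1 := by rwa [Real.norm_of_nonneg hr0]
  have hexp : n * 1 + n.choose 2 = n * (n + 1) / 2 :=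
    calc
      n * 1 + n.choose 2 = (n + 1).choose 2 := by
        rw [mul_one, Nat.choose_succ_succ' n 1, Nat.choose_one_right]
      _ = n * (n + 1) / 2 := by rw [Nat.choose_two_right, Nat.add_sub_cancel, mul_comm]
  have hmajorant := (StrictTuple.hasSum_prod_pow hr n 1).mul_left (C₀ ^ n)
  rw [hexp, ← mul_div_assoc] at hmajorant
  have hle : ∀ f : StrictTuple n 1, ‖∏ j, s (f.1 j)‖ ≤ C₀ ^ n * ∏ j, r ^ f.1 j :=
    StrictTuple.norm_prod_le_pow_mul_prod hbound
  have hsum := hmajorant.summable.of_nonneg_of_le (fun _ => norm_nonneg _) hle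
  exact ⟨hsum, hasSum_le hle hsum.hasSum hmajorant⟩

theorem stmt19 (n : ℕ) (hn : 1 ≤ n) (s : ℕ → ℝ) (C₀ r : ℝ) (hC₀ : 0 ≤ C₀)
    (hr0 : 0 ≤ r) (hr1 : r < 1)
    (hmono : ∀ i, 1 ≤ i → s (i + 1) ≤ s i)
    (hnonneg : ∀ i, 1 ≤ i → 0 ≤ s i)
    (hbound : ∀ i, 1 ≤ i → s i ≤ C₀ * r ^ i) :
    ∑' f : {f : Fin n → ℕ // StrictMono f ∧ ∀ j, 1 ≤ f j}, ∏ j, s (f.1 j) ≤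
      C₀ ^ n * r ^ (n * (n + 1) / 2) / ∏ i ∈ Finset.range n, (1 - r ^ (i + 1)) := by
  obtain ⟨hsum, hle⟩ := stmt19_general n s C₀ r hr0 hr1 fun i hi =>
    (Real.norm_of_nonneg (hnonneg i hi)).trans_le (hbound i hi)
  exact (Real.le_norm_self _).trans ((norm_tsum_le_tsum_norm hsum).trans hle)
end
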